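/- arXiv:1310.4035 — 2 statements merged into one kernel-verified Lean document; each statement's English description precedes it below -/
import Mathlib

section
/- Every Gruenhage compact space has the Bishop property (B). -/
open Set Topology Filter

/-- `f ≺ g`: `f ≠ g` and `f` agrees with `g` on the support of `f` (the closure of
the set where `f` is nonzero). -/
def Prec {K : Type*} [TopologicalSpace K] (f g : C(K, ℝ)) : Prop :=
  f ≠ g ∧ ∀ t ∈ closure {t | f t ≠ 0}, f t = g t

/-- `f ≺_δ g`: `f ≺ g` and `‖f - g‖ ≥ δ`. -/
def PrecDelta {K : Type*} [TopologicalSpace K] [CompactSpace K] (δ : ℝ) (f g : C(K, ℝ)) : Prop :=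
  Prec f g ∧ δ ≤ ‖f - g‖

/-- `F` is a `δ`-`≺`-chain. -/
def IsPrecChain {K : Type*} [TopologicalSpace K] [CompactSpace K] (δ : ℝ)
    (F : Set C(K, ℝ)) : Prop :=
  ∀ f ∈ F, ∀ g ∈ F, f ≠ g → PrecDelta δ f g ∨ PrecDelta δ g f

/-- A compact Hausdorff space has the Bishop property (B) if for every `δ > 0`
every `δ`-`≺`-chain in `C(K)` is countable. -/
def HasBishop (K : Type*) [TopologicalSpace K] [CompactSpace K] [T2Space K] : Prop :=
  ∀ δ : ℝ, 0 < δ → ∀ F : Set C(K, ℝ), IsPrecChain δ F → F.Countable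

/-!
By the definition of `≺`, along a `δ`-`≺`-chain the sets `{δ ≤ |f|}` strictly increase, and on the
closure `L` of their union each of them coincides with `{f ≠ 0}`. So their traces on `L` form a
chain of clopen sets in a compact space which is again Gruenhage, and it suffices to show that such
a chain `𝒞` is countable.

The main tool is a shrinking argument. A closed set `H` off the common intersection of a sunflower
of open sets, but covered by it, meets only finitely many petals. Hence a set that is large, in any
sense which passes to one of finitely many pieces, can be shrunk to a large set which the sunflower
no longer splits. Doing this for all `U n` in turn yields a decreasing sequence of large sets whose
intersection has at most one point.

Applied to the closed sets met by a filter, this shows that a countably compact Gruenhage space is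
compact. A chain of clopen sets of uncountable cofinality would have a countably compact union, so
every subchain of `𝒞` has countable cofinality and, by complementation, countable coinitiality. This
gives a countable `M` that reflects `𝒞`. If some `C ∈ 𝒞` were not in `M`, then a closed `H ∈ M`
meets the gap just below `C` in `M` if and only if it meets the gap just above. Shrinking within `M`
produces a decreasing sequence meeting both gaps, so its intersection contains a point of `C` and a
point outside `C`.
-/

section Sets

variable {X : Type*}

/-- The points lying in at least two members of `𝒱`. For a family as in the definition of a
Gruenhage space, this is the common intersection `R_n` as soon as the family has two members. -/
def overlap (𝒱 : Set (Set X)) : Set X :=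
  {x | ∃ V ∈ 𝒱, ∃ W ∈ 𝒱, V ≠ W ∧ x ∈ V ∩ W}

/-- Each member of `𝒱` contains `A` or misses it: the points of `A` cannot be told apart
by `𝒱`. -/
def Unsplit (𝒱 : Set (Set X)) (A : Set X) : Prop :=
  ∀ V ∈ 𝒱, (A ∩ V).Nonempty → A ⊆ V

theorem eq_of_mem_of_notMem_overlap {𝒱 : Set (Set X)} {V W : Set X} {x : X} (hV : V ∈ 𝒱)
    (hW : W ∈ 𝒱) (hxV : x ∈ V) (hxW : x ∈ W) (hx : x ∉ overlap 𝒱) : V = W :=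
  by_contra fun hne => hx ⟨V, hV, W, hW, hne, hxV, hxW⟩

theorem unsplit_of_disjoint_sUnion {𝒱 : Set (Set X)} {A : Set X} (h : Disjoint A (⋃₀ 𝒱)) :
    Unsplit 𝒱 A := by
  rintro V hV ⟨x, hxA, hxV⟩
  exact absurd ⟨V, hV, hxV⟩ (h.notMem_of_mem_left hxA)

theorem unsplit_of_disjoint_overlap {𝒱 : Set (Set X)} {A V : Set X} (hV : V ∈ 𝒱) (hAV : A ⊆ V)
    (h : Disjoint A (overlap 𝒱)) : Unsplit 𝒱 A := by
  rintro W hW ⟨x, hxA, hxW⟩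
  exact eq_of_mem_of_notMem_overlap hV hW (hAV hxA) hxW (h.notMem_of_mem_left hxA) ▸ hAV

theorem inter_eq_sdiff_sUnion_of_disjoint_overlap {𝒱 : Set (Set X)} {H V : Set X} (hV : V ∈ 𝒱)
    (hdisj : Disjoint H (overlap 𝒱)) (hcov : H ⊆ ⋃₀ 𝒱) : H ∩ V = H \ ⋃₀ (𝒱 \ {V}) := by
  ext x
  refine and_congr_right fun hxH => ⟨?_, fun hx => ?_⟩
  · rintro hxV ⟨W, ⟨hW, hne⟩, hxW⟩
    exact hne (eq_of_mem_of_notMem_overlap hW hV hxW hxV (hdisj.notMem_of_mem_left hxH))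
  · obtain ⟨W, hW, hxW⟩ := hcov hxH
    by_contra hxV
    exact hx ⟨W, ⟨hW, fun h => hxV (h ▸ hxW)⟩, hxW⟩

theorem isOpen_overlap [TopologicalSpace X] {𝒱 : Set (Set X)} (h : ∀ V ∈ 𝒱, IsOpen V) :
    IsOpen (overlap 𝒱) := by
  refine isOpen_iff_forall_mem_open.2 ?_
  rintro x ⟨V, hV, W, hW, hne, hx⟩
  exact ⟨V ∩ W, fun y hy => ⟨V, hV, W, hW, hne, hy⟩, (h V hV).inter (h W hW), hx⟩

theorem isChain_image_compl {𝒟 : Set (Set X)} (h : IsChain (· ⊆ ·) 𝒟) :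
    IsChain (· ⊆ ·) (compl '' 𝒟) := by
  rintro _ ⟨D, hD, rfl⟩ _ ⟨E, hE, rfl⟩ -
  exact (h.total hE hD).imp compl_subset_compl.2 compl_subset_compl.2

end Sets

section Compactness

variable {X : Type*} [TopologicalSpace X]

theorem nonempty_iInter_inter_of_antitone [CountablyCompactSpace X] {H : ℕ → Set X} {G : Set X}
    (hanti : Antitone H) (hH : ∀ n, IsClosed (H n)) (hG : IsClosed G)
    (hne : ∀ n, (H n ∩ G).Nonempty) : ((⋂ n, H n) ∩ G).Nonempty := by
  by_contra hempty
  have hcov : G ⊆ ⋃ n, (H n)ᶜ := by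
    rw [← compl_iInter]
    exact fun x hxG hxH => hempty ⟨x, hxH, hxG⟩
  obtain ⟨n, hn⟩ := hG.isCountablyCompact.elim_directed_cover _ (fun n => (hH n).isOpen_compl) hcov
    (directed_of_isDirected_le fun _ _ hmn => compl_subset_compl.2 (hanti hmn))
  obtain ⟨x, hxH, hxG⟩ := hne n
  exact hn hxG hxH

theorem exists_mem_subset_of_isChain {s : Set X} (hs : IsCompact s) {𝒟 : Set (Set X)}
    (hne : 𝒟.Nonempty) (hopen : ∀ D ∈ 𝒟, IsOpen D) (hchain : IsChain (· ⊆ ·) 𝒟)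
    (hcov : s ⊆ ⋃₀ 𝒟) : ∃ D ∈ 𝒟, s ⊆ D := by
  have := hne.to_subtype
  obtain ⟨D, hD⟩ := hs.elim_directed_cover (fun D : 𝒟 => D.1) (fun D => hopen D D.2)
    (by rwa [← sUnion_eq_iUnion]) hchain.directedOn.directed_val
  exact ⟨D, D.2, hD⟩

theorem finite_image_inter_of_disjoint_overlap [CountablyCompactSpace X] {𝒱 : Set (Set X)}
    (hopen : ∀ V ∈ 𝒱, IsOpen V) {H : Set X} (hH : IsClosed H) (hdisj : Disjoint H (overlap 𝒱))
    (hcov : H ⊆ ⋃₀ 𝒱) : ((H ∩ ·) '' 𝒱).Finite := by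
  suffices hfin : {V ∈ 𝒱 | (H ∩ V).Nonempty}.Finite by
    refine ((hfin.image (H ∩ ·)).insert ∅).subset ?_
    rintro _ ⟨V, hV, rfl⟩
    exact (H ∩ V).eq_empty_or_nonempty.imp id fun hne => ⟨V, ⟨hV, hne⟩, rfl⟩
  by_contra hinf
  let V := Set.Infinite.natEmbedding _ hinf
  choose x hxH hxV using fun n => (V n).2.2
  obtain ⟨a, haH, ha⟩ := hH.isCountablyCompact.seq_clusterPt x (.of_forall hxH)
  obtain ⟨W, hW, haW⟩ := hcov haH
  have hfreq : ∃ᶠ n in atTop, x n ∈ W := ha.frequently ((hopen W hW).mem_nhds haW)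
  obtain ⟨m, -, hm⟩ := frequently_atTop.1 hfreq 0
  obtain ⟨n, hmn, hn⟩ := frequently_atTop.1 hfreq (m + 1)
  have hV_eq : ∀ k, x k ∈ W → (V k).1 = W := fun k hk =>
    eq_of_mem_of_notMem_overlap (V k).2.1 hW (hxV k) hk (hdisj.notMem_of_mem_left (hxH k))
  have hVmn : V m = V n := Subtype.ext ((hV_eq m hm).trans (hV_eq n hn).symm)
  exact (Nat.lt_of_succ_le hmn).ne (V.injective hVmn)

/-- The sets into which `𝒱` cuts `H` in the shrinking argument. The sets `H ∩ V` are included only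
under a condition that makes them closed and, in a countably compact space, finite in number. -/
def pieces (𝒱 : Set (Set X)) (H : Set X) : Set (Set X) :=
  {H \ overlap 𝒱, H \ ⋃₀ 𝒱} ∪
    {A ∈ (H ∩ ·) '' 𝒱 | IsClosed H ∧ Disjoint H (overlap 𝒱) ∧ H ⊆ ⋃₀ 𝒱}

theorem countable_pieces [CountablyCompactSpace X] {𝒱 : Set (Set X)}
    (hopen : ∀ V ∈ 𝒱, IsOpen V) (H : Set X) : (pieces 𝒱 H).Countable := by
  refine ((countable_singleton _).insert _).union ?_
  by_cases h : IsClosed H ∧ Disjoint H (overlap 𝒱) ∧ H ⊆ ⋃₀ 𝒱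
  · exact (finite_image_inter_of_disjoint_overlap hopen h.1 h.2.1 h.2.2).countable.mono
      (sep_subset _ _)
  · exact countable_empty.mono fun _ hA => h hA.2

theorem isClosed_of_mem_pieces {𝒱 : Set (Set X)} (hopen : ∀ V ∈ 𝒱, IsOpen V) {H A : Set X}
    (hH : IsClosed H) (hA : A ∈ pieces 𝒱 H) : IsClosed A := by
  rcases hA with (rfl | rfl) | ⟨⟨V, hV, rfl⟩, -, hdisj, hcov⟩
  · exact hH.sdiff (isOpen_overlap hopen)
  · exact hH.sdiff (isOpen_sUnion hopen)
  · simp only [inter_eq_sdiff_sUnion_of_disjoint_overlap hV hdisj hcov]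
    exact hH.sdiff (isOpen_sUnion fun W hW => hopen W hW.1)

end Compactness

/-- A Gruenhage system on `X`: families `U n` of open sets, each a sunflower (the intersection of
two distinct members does not depend on the members), which jointly separate the points of `X`.
The intersections `R_n` of the usual definition are encoded as `overlap (U n)`. -/
structure IsGruenhageSystem {X : Type*} [TopologicalSpace X] (U : ℕ → Set (Set X)) : Prop where
  isOpen : ∀ n, ∀ V ∈ U n, IsOpen V
  overlap_subset : ∀ n, ∀ V ∈ U n, overlap (U n) ⊆ V
  eq_of_forall_mem_iff : ∀ x y, (∀ n, ∀ V ∈ U n, x ∈ V ↔ y ∈ V) → x = y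

theorem isGruenhageSystem_of_inter_eq {X : Type*} [TopologicalSpace X] {U : ℕ → Set (Set X)}
    {R : ℕ → Set X} (hopen : ∀ n, ∀ V ∈ U n, IsOpen V)
    (hinter : ∀ n, ∀ V ∈ U n, ∀ W ∈ U n, V ≠ W → V ∩ W = R n)
    (hsep : ∀ x y, x ≠ y → ∃ n, ∃ V ∈ U n, Xor (x ∈ V) (y ∈ V)) : IsGruenhageSystem U where
  isOpen := hopen
  overlap_subset := by
    rintro n V hV x ⟨W, hW, W', hW', hne, hx⟩
    rcases eq_or_ne V W with rfl | hVW
    · exact hx.1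
    · exact (hinter n V hV W hW hVW ▸ hinter n W hW W' hW' hne ▸ hx : x ∈ V ∩ W).1
  eq_of_forall_mem_iff x y hxy := by
    by_contra hne
    obtain ⟨n, V, hV, hxor⟩ := hsep x y hne
    exact (xor_iff_not_iff _ _).1 hxor (hxy n V hV)

theorem IsGruenhageSystem.preimage {X Y : Type*} [TopologicalSpace X] [TopologicalSpace Y]
    {U : ℕ → Set (Set X)} (hU : IsGruenhageSystem U) {f : Y → X} (hf : Continuous f)
    (hinj : f.Injective) : IsGruenhageSystem fun n => Set.preimage f '' U n where
  isOpen n := forall_mem_image.2 fun V hV => (hU.isOpen n V hV).preimage hf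
  overlap_subset n := forall_mem_image.2 fun V hV => by
    rintro y ⟨_, ⟨W, hW, rfl⟩, _, ⟨W', hW', rfl⟩, hne, hy⟩
    exact hU.overlap_subset n V hV ⟨W, hW, W', hW', fun h => hne (h ▸ rfl), hy⟩
  eq_of_forall_mem_iff x y hxy :=
    hinj (hU.eq_of_forall_mem_iff _ _ fun n V hV => hxy n _ (mem_image_of_mem _ hV))

section StableFamily

variable {X : Type*} [TopologicalSpace X]

/-- A family `𝓜` of closed sets rich enough for the shrinking argument: it contains the pieces
into which `𝒱` cuts its members, and whenever `l` eventually avoids a set `Z ∈ 𝓜`, every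
`H ∈ 𝓜` can be shrunk within `𝓜` to avoid `Z` without changing it along `l`. The sets of `𝓜`
which `l` frequently visits are then the large ones. -/
structure IsStableFamily (l : Filter X) (𝒱 𝓜 : Set (Set X)) : Prop where
  isClosed : ∀ H ∈ 𝓜, IsClosed H
  pieces_subset : ∀ H ∈ 𝓜, pieces 𝒱 H ⊆ 𝓜
  exists_inter_mem : ∀ H ∈ 𝓜, ∀ Z ∈ 𝓜, (∀ᶠ x in l, x ∉ Z) → ∃ T ∈ l, Disjoint T Z ∧ H ∩ T ∈ 𝓜

variable {l : Filter X}

theorem IsStableFamily.frequently_sdiff_or_exists_subset {𝒱 𝓜 : Set (Set X)}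
    (h𝓜 : IsStableFamily l 𝒱 𝓜) {H W : Set X} (hH : H ∈ 𝓜) (hl : ∃ᶠ x in l, x ∈ H)
    (hW : H \ W ∈ 𝓜) :
    (∃ᶠ x in l, x ∈ H \ W) ∨ ∃ H' ∈ 𝓜, (∃ᶠ x in l, x ∈ H') ∧ H' ⊆ H ∩ W := by
  refine or_iff_not_imp_left.2 fun hrare => ?_
  obtain ⟨T, hT, hdisj, hHT⟩ := h𝓜.exists_inter_mem H hH _ hW (not_frequently.1 hrare)
  refine ⟨H ∩ T, hHT, hl.and_eventually hT, fun x hx => ⟨hx.1, ?_⟩⟩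
  by_contra hxW
  exact hdisj.notMem_of_mem_left hx.2 ⟨hx.1, hxW⟩

theorem IsStableFamily.exists_unsplit [CountablyCompactSpace X] {𝒱 𝓜 : Set (Set X)}
    (h𝓜 : IsStableFamily l 𝒱 𝓜) (hopen : ∀ V ∈ 𝒱, IsOpen V) (hover : ∀ V ∈ 𝒱, overlap 𝒱 ⊆ V)
    {H : Set X} (hH : H ∈ 𝓜) (hl : ∃ᶠ x in l, x ∈ H) :
    ∃ H' ∈ 𝓜, (∃ᶠ x in l, x ∈ H') ∧ H' ⊆ H ∧ Unsplit 𝒱 H' := by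
  have hH₁ : H \ overlap 𝒱 ∈ 𝓜 := h𝓜.pieces_subset H hH (.inl (.inl rfl))
  have hH₂ : (H \ overlap 𝒱) \ ⋃₀ 𝒱 ∈ 𝓜 := h𝓜.pieces_subset _ hH₁ (.inl (.inr rfl))
  rcases (h𝓜.frequently_sdiff_or_exists_subset hH hl hH₁).symm with
    ⟨H', hH', hl', hsub⟩ | hl₁
  · exact ⟨H', hH', hl', hsub.trans inter_subset_left,
      fun V hV _ => (hsub.trans inter_subset_right).trans (hover V hV)⟩
  rcases h𝓜.frequently_sdiff_or_exists_subset hH₁ hl₁ hH₂ with hl₂ | ⟨H', hH', hl', hsub⟩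
  · exact ⟨_, hH₂, hl₂, sdiff_subset.trans sdiff_subset,
      unsplit_of_disjoint_sUnion disjoint_sdiff_left⟩
  obtain ⟨hsub₁, hcov⟩ := subset_inter_iff.1 hsub
  have hdisj : Disjoint H' (overlap 𝒱) := disjoint_sdiff_left.mono_left hsub₁
  have hfin := finite_image_inter_of_disjoint_overlap hopen (h𝓜.isClosed H' hH') hdisj hcov
  have hcover : ∃ᶠ x in l, ∃ A ∈ (H' ∩ ·) '' 𝒱, x ∈ A := hl'.mono fun x hx =>
    let ⟨V, hV, hxV⟩ := hcov hx
    ⟨_, mem_image_of_mem _ hV, hx, hxV⟩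
  obtain ⟨_, ⟨V, hV, rfl⟩, hlV⟩ := (frequently_exists_finite hfin).1 hcover
  exact ⟨_, h𝓜.pieces_subset H' hH' (.inr ⟨⟨V, hV, rfl⟩, h𝓜.isClosed H' hH', hdisj, hcov⟩), hlV,
    inter_subset_left.trans (hsub₁.trans sdiff_subset),
    unsplit_of_disjoint_overlap hV inter_subset_right (hdisj.mono_left inter_subset_left)⟩

theorem IsGruenhageSystem.exists_antitone_subsingleton_iInter [CountablyCompactSpace X] [l.NeBot]
    {U : ℕ → Set (Set X)} (hU : IsGruenhageSystem U) {𝓜 : Set (Set X)}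
    (h𝓜 : ∀ n, IsStableFamily l (U n) 𝓜) (huniv : univ ∈ 𝓜) :
    ∃ H : ℕ → Set X, Antitone H ∧ (∀ n, H n ∈ 𝓜 ∧ ∃ᶠ x in l, x ∈ H n) ∧
      (⋂ n, H n).Subsingleton := by
  have hstep : ∀ n, ∀ H : {H ∈ 𝓜 | ∃ᶠ x in l, x ∈ H},
      ∃ H' : {H ∈ 𝓜 | ∃ᶠ x in l, x ∈ H}, H'.1 ⊆ H.1 ∧ Unsplit (U n) H'.1 := fun n H =>
    let ⟨H', hH', hl, h⟩ :=
      (h𝓜 n).exists_unsplit (hU.isOpen n) (hU.overlap_subset n) H.2.1 H.2.2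
    ⟨⟨H', hH', hl⟩, h⟩
  choose next hsub hunsplit using hstep
  let H : ℕ → {H ∈ 𝓜 | ∃ᶠ x in l, x ∈ H} := fun n =>
    Nat.rec ⟨univ, huniv, (Eventually.of_forall mem_univ).frequently⟩ next n
  refine ⟨fun n => (H n).1, antitone_nat_of_succ_le fun n => hsub n (H n), fun n => (H n).2, ?_⟩
  intro x hx y hy
  rw [mem_iInter] at hx hy
  exact hU.eq_of_forall_mem_iff x y fun n V hV =>
    ⟨fun h => hunsplit n (H n) V hV ⟨x, hx (n + 1), h⟩ (hy (n + 1)),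
      fun h => hunsplit n (H n) V hV ⟨y, hy (n + 1), h⟩ (hx (n + 1))⟩

theorem isStableFamily_setOf_isClosed {𝒱 : Set (Set X)} (hopen : ∀ V ∈ 𝒱, IsOpen V) :
    IsStableFamily (l.lift' closure) 𝒱 {H | IsClosed H} where
  isClosed _ := id
  pieces_subset _ hH _ hA := isClosed_of_mem_pieces hopen hH hA
  exists_inter_mem H hH Z _ hlZ := by
    obtain ⟨S, hS, hSZ⟩ := (l.basis_sets.lift'_closure.mem_iff).1 hlZ
    exact ⟨closure S, l.basis_sets.lift'_closure.mem_of_mem hS,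
      Set.disjoint_left.2 hSZ, hH.inter isClosed_closure⟩

theorem IsGruenhageSystem.compactSpace [CountablyCompactSpace X] {U : ℕ → Set (Set X)}
    (hU : IsGruenhageSystem U) : CompactSpace X := by
  refine ⟨fun l _ _ => ?_⟩
  have : (l.lift' closure).NeBot := neBot_of_le l.le_lift'_closure
  obtain ⟨H, hanti, hH, hsub⟩ := hU.exists_antitone_subsingleton_iInter
    (fun n => isStableFamily_setOf_isClosed (l := l) (hU.isOpen n)) isClosed_univ
  have hmeet : ∀ S ∈ l, ((⋂ n, H n) ∩ closure S).Nonempty := fun S hS =>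
    nonempty_iInter_inter_of_antitone hanti (fun n => (hH n).1) isClosed_closure fun n =>
      ((hH n).2.and_eventually (mem_lift' hS)).exists
  obtain ⟨x, hx, -⟩ := hmeet univ univ_mem
  refine ⟨x, mem_univ x, clusterPt_iff_forall_mem_closure.2 fun S hS => ?_⟩
  obtain ⟨y, hy, hyS⟩ := hmeet S hS
  exact hsub hy hx ▸ hyS

end StableFamily

section Cofinality

variable {X : Type*} [TopologicalSpace X] [CompactSpace X] {U : ℕ → Set (Set X)}
  {𝒟 : Set (Set X)}

theorem countablyCompactSpace_sUnion (hclosed : ∀ D ∈ 𝒟, IsClosed D)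
    (hdir : ∀ S ⊆ 𝒟, S.Countable → ∃ D ∈ 𝒟, ∀ E ∈ S, E ⊆ D) : CountablyCompactSpace (⋃₀ 𝒟) := by
  refine ⟨isCountablyCompact_iff_seq_clusterPt.2 fun x _ => ?_⟩
  choose E hE hxE using fun n => (x n).2
  obtain ⟨D, hD, hED⟩ := hdir (range E) (range_subset_iff.2 hE) (countable_range E)
  obtain ⟨a, haD, ha⟩ := (hclosed D hD).isCompact.isCountablyCompact.seq_clusterPt
    (fun n => (x n).1) (.of_forall fun n => hED _ (mem_range_self n) (hxE n))
  exact ⟨⟨a, D, hD, haD⟩, mem_univ _, IsInducing.subtypeVal.mapClusterPt_iff.1 ha⟩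

theorem IsGruenhageSystem.exists_countable_cofinal (hU : IsGruenhageSystem U)
    (hclopen : ∀ D ∈ 𝒟, IsClopen D) (hchain : IsChain (· ⊆ ·) 𝒟) :
    ∃ S ⊆ 𝒟, S.Countable ∧ ∀ D ∈ 𝒟, ∃ E ∈ S, D ⊆ E := by
  by_contra! hcon
  have hdir : ∀ S ⊆ 𝒟, S.Countable → ∃ D ∈ 𝒟, ∀ E ∈ S, E ⊆ D := fun S hS hSc =>
    let ⟨D, hD, hDS⟩ := hcon S hS hSc
    ⟨D, hD, fun E hE => (hchain.total hD (hS hE)).resolve_left (hDS E hE)⟩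
  have := countablyCompactSpace_sUnion (fun D hD => (hclopen D hD).isClosed) hdir
  have hcompact : IsCompact (⋃₀ 𝒟) := isCompact_iff_compactSpace.2
    (hU.preimage continuous_subtype_val Subtype.val_injective).compactSpace
  obtain ⟨D₀, hD₀, -⟩ := hdir ∅ (empty_subset 𝒟) countable_empty
  obtain ⟨D, hD, hsub⟩ := exists_mem_subset_of_isChain hcompact ⟨D₀, hD₀⟩
    (fun D hD => (hclopen D hD).isOpen) hchain Subset.rfl
  obtain ⟨E, hE, hED⟩ := hcon {D} (singleton_subset_iff.2 hD) (countable_singleton D)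
  exact hED D rfl ((subset_sUnion_of_mem hE).trans hsub)

theorem IsGruenhageSystem.exists_countable_coinitial (hU : IsGruenhageSystem U)
    (hclopen : ∀ D ∈ 𝒟, IsClopen D) (hchain : IsChain (· ⊆ ·) 𝒟) :
    ∃ S ⊆ 𝒟, S.Countable ∧ ∀ D ∈ 𝒟, ∃ E ∈ S, E ⊆ D := by
  obtain ⟨S, hS, hSc, hcof⟩ := hU.exists_countable_cofinal
    (forall_mem_image.2 fun D hD => (hclopen D hD).compl) (isChain_image_compl hchain)
  refine ⟨compl '' S, ?_, hSc.image compl, fun D hD => ?_⟩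
  · rintro _ ⟨E, hE, rfl⟩
    obtain ⟨D, hD, rfl⟩ := hS hE
    rwa [compl_compl]
  · obtain ⟨E, hE, hDE⟩ := hcof Dᶜ (mem_image_of_mem compl hD)
    exact ⟨Eᶜ, mem_image_of_mem compl hE, compl_subset_comm.1 hDE⟩

end Cofinality

section Reflection

theorem exists_countable_superset_closed_under {α : Type*} {f : α → α → Set α}
    (hf : ∀ a b, (f a b).Countable) {s : Set α} (hs : s.Countable) :
    ∃ t, s ⊆ t ∧ t.Countable ∧ ∀ a ∈ t, ∀ b ∈ t, f a b ⊆ t := by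
  let step : Set α → Set α := fun t => t ∪ ⋃ a ∈ t, ⋃ b ∈ t, f a b
  let t : ℕ → Set α := fun n => step^[n] s
  have ht_succ : ∀ n, t (n + 1) = step (t n) := fun n => Function.iterate_succ_apply' step n s
  have ht_mono : Monotone t := monotone_nat_of_le_succ fun n => ht_succ n ▸ subset_union_left
  have ht_countable : ∀ n, (t n).Countable := by
    intro n
    induction n with
    | zero => exact hs
    | succ n ih => exact ht_succ n ▸ ih.union (ih.biUnion fun a _ => ih.biUnion fun b _ => hf a b)
  refine ⟨⋃ n, t n, subset_iUnion t 0, countable_iUnion ht_countable, ?_⟩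
  intro a ha b hb c hc
  obtain ⟨m, ham⟩ := mem_iUnion.1 ha
  obtain ⟨n, hbn⟩ := mem_iUnion.1 hb
  refine mem_iUnion.2 ⟨max m n + 1, ht_succ _ ▸ Or.inr ?_⟩
  exact mem_iUnion₂.2 ⟨a, ht_mono (le_max_left m n) ham,
    mem_iUnion₂.2 ⟨b, ht_mono (le_max_right m n) hbn, hc⟩⟩

variable {X : Type*} [TopologicalSpace X]

/-- `M` reflects the chain `𝒞` and the families `U n`, in the manner of an elementary submodel:
it is closed under the set operations of the shrinking argument, and if `H` misses the difference
of a member of `𝒞` and `D`, where `H, D ∈ M`, then this member can be replaced by a larger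
(`exists_superset`) or smaller (`exists_subset`) one which itself belongs to `M`. -/
structure Reflects (U : ℕ → Set (Set X)) (𝒞 M : Set (Set X)) : Prop where
  empty_mem : ∅ ∈ M
  univ_mem : univ ∈ M
  sdiff_mem : ∀ H ∈ M, ∀ D ∈ M, H \ D ∈ M
  pieces_subset : ∀ n, ∀ H ∈ M, pieces (U n) H ⊆ M
  exists_superset : ∀ H ∈ M, ∀ D ∈ M, ∀ C ∈ 𝒞, D ⊆ C → Disjoint H (C \ D) →
    ∃ E ∈ M ∩ 𝒞, C ⊆ E ∧ Disjoint H (E \ D)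
  exists_subset : ∀ H ∈ M, ∀ E ∈ M, ∀ C ∈ 𝒞, C ⊆ E → Disjoint H (E \ C) →
    ∃ D ∈ M ∩ 𝒞, D ⊆ C ∧ Disjoint H (E \ D)

theorem IsGruenhageSystem.exists_countable_reflects [CompactSpace X] {U : ℕ → Set (Set X)}
    (hU : IsGruenhageSystem U) {𝒞 : Set (Set X)} (hclopen : ∀ C ∈ 𝒞, IsClopen C)
    (hchain : IsChain (· ⊆ ·) 𝒞) : ∃ M : Set (Set X), M.Countable ∧ Reflects U 𝒞 M := by
  choose sup hsup hsup_countable hsup_cof using fun H D : Set X =>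
    hU.exists_countable_cofinal (𝒟 := {C ∈ 𝒞 | D ⊆ C ∧ Disjoint H (C \ D)})
      (fun C hC => hclopen C hC.1) (hchain.mono (sep_subset _ _))
  choose sub hsub hsub_countable hsub_coinit using fun H E : Set X =>
    hU.exists_countable_coinitial (𝒟 := {C ∈ 𝒞 | C ⊆ E ∧ Disjoint H (E \ C)})
      (fun C hC => hclopen C hC.1) (hchain.mono (sep_subset _ _))
  obtain ⟨M, hM₀, hM, hclosed⟩ := exists_countable_superset_closed_under
    (f := fun H D => {H \ D} ∪ (⋃ n, pieces (U n) H) ∪ sup H D ∪ sub H D)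
    (fun H D => (((countable_singleton _).union (countable_iUnion fun n =>
      countable_pieces (hU.isOpen n) H)).union (hsup_countable H D)).union (hsub_countable H D))
    (s := {∅, univ}) ((countable_singleton _).insert _)
  simp only [union_subset_iff, singleton_subset_iff, iUnion_subset_iff] at hclosed
  refine ⟨M, hM, hM₀ (.inl rfl), hM₀ (.inr rfl), fun H hH D hD => (hclosed H hH D hD).1.1.1,
    fun n H hH => (hclosed H hH H hH).1.1.2 n, ?_, ?_⟩
  · intro H hH D hD C hC hDC hdisj
    obtain ⟨E, hE, hCE⟩ := hsup_cof H D C ⟨hC, hDC, hdisj⟩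
    exact ⟨E, ⟨(hclosed H hH D hD).1.2 hE, (hsup H D hE).1⟩, hCE, (hsup H D hE).2.2⟩
  · intro H hH E hE C hC hCE hdisj
    obtain ⟨D, hD, hDC⟩ := hsub_coinit H E C ⟨hC, hCE, hdisj⟩
    exact ⟨D, ⟨(hclosed H hH E hE).2 hD, (hsub H E hD).1⟩, hDC, (hsub H E hD).2.2⟩

end Reflection

section Gaps

variable {X : Type*}

/-- The part of `C` not exhausted by the members of `𝒜` contained in `C`. -/
def lowerGap (𝒜 : Set (Set X)) (C : Set X) : Set X :=
  C \ ⋃₀ {D ∈ 𝒜 | D ⊆ C}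

/-- The points outside `C` not excluded by the members of `𝒜` containing `C`; the dual of
`lowerGap`. -/
def upperGap (𝒜 : Set (Set X)) (C : Set X) : Set X :=
  ⋂₀ {E ∈ 𝒜 | C ⊆ E} \ C

theorem lowerGap_subset_sdiff {𝒜 : Set (Set X)} {C D E : Set X} (hD : D ∈ 𝒜) (hDC : D ⊆ C)
    (hCE : C ⊆ E) : lowerGap 𝒜 C ⊆ E \ D :=
  fun _ hx => ⟨hCE hx.1, fun hxD => hx.2 ⟨D, ⟨hD, hDC⟩, hxD⟩⟩

theorem upperGap_subset_sdiff {𝒜 : Set (Set X)} {C D E : Set X} (hE : E ∈ 𝒜) (hDC : D ⊆ C)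
    (hCE : C ⊆ E) : upperGap 𝒜 C ⊆ E \ D :=
  fun _ hx => ⟨hx.1 E ⟨hE, hCE⟩, fun hxD => hx.2 (hDC hxD)⟩

variable [TopologicalSpace X] {𝒜 : Set (Set X)} {C H : Set X}

theorem isClosed_lowerGap (hopen : ∀ D ∈ 𝒜, IsOpen D) (hC : IsClosed C) :
    IsClosed (lowerGap 𝒜 C) :=
  hC.sdiff (isOpen_sUnion fun D hD => hopen D hD.1)

theorem isClosed_upperGap (hclosed : ∀ E ∈ 𝒜, IsClosed E) (hC : IsOpen C) :
    IsClosed (upperGap 𝒜 C) :=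
  (isClosed_sInter fun E hE => hclosed E hE.1).sdiff hC

theorem exists_disjoint_sdiff_of_disjoint_lowerGap [CompactSpace X]
    (hopen : ∀ D ∈ 𝒜, IsOpen D) (hchain : IsChain (· ⊆ ·) 𝒜) (hempty : ∅ ∈ 𝒜)
    (hC : IsClosed C) (hH : IsClosed H) (hdisj : Disjoint H (lowerGap 𝒜 C)) :
    ∃ D ∈ 𝒜, D ⊆ C ∧ Disjoint H (C \ D) := by
  obtain ⟨D, ⟨hD, hDC⟩, hHD⟩ := exists_mem_subset_of_isChain (hH.inter hC).isCompact
    (𝒟 := {D ∈ 𝒜 | D ⊆ C}) ⟨∅, hempty, empty_subset C⟩ (fun D hD => hopen D hD.1)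
    (hchain.mono (sep_subset _ _)) fun x hx =>
      by_contra fun hxD => hdisj.notMem_of_mem_left hx.1 ⟨hx.2, hxD⟩
  exact ⟨D, hD, hDC, Set.disjoint_left.2 fun x hxH hx => hx.2 (hHD ⟨hxH, hx.1⟩)⟩

theorem exists_disjoint_sdiff_of_disjoint_upperGap [CompactSpace X]
    (hclosed : ∀ E ∈ 𝒜, IsClosed E) (hchain : IsChain (· ⊆ ·) 𝒜) (huniv : univ ∈ 𝒜)
    (hC : IsOpen C) (hH : IsClosed H) (hdisj : Disjoint H (upperGap 𝒜 C)) :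
    ∃ E ∈ 𝒜, C ⊆ E ∧ Disjoint H (E \ C) := by
  have hcov : H \ C ⊆ ⋃₀ (compl '' {E ∈ 𝒜 | C ⊆ E}) := fun x hx => by
    rw [← compl_sInter]
    exact fun hxE => hdisj.notMem_of_mem_left hx.1 ⟨hxE, hx.2⟩
  obtain ⟨_, ⟨E, ⟨hE, hCE⟩, rfl⟩, hHE⟩ := exists_mem_subset_of_isChain (hH.sdiff hC).isCompact
    (𝒟 := compl '' {E ∈ 𝒜 | C ⊆ E}) ⟨univᶜ, univ, ⟨huniv, subset_univ C⟩, rfl⟩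
    (forall_mem_image.2 fun E hE => (hclosed E hE.1).isOpen_compl)
    (isChain_image_compl (hchain.mono (sep_subset _ _))) hcov
  exact ⟨E, hE, hCE, Set.disjoint_left.2 fun x hxH hx => hHE ⟨hxH, hx.2⟩ hx.1⟩

end Gaps

section Chains

variable {X : Type*} [TopologicalSpace X] [CompactSpace X] {U : ℕ → Set (Set X)}
  {𝒞 M : Set (Set X)} {C H : Set X}

theorem Reflects.disjoint_lowerGap_iff (hM : Reflects U 𝒞 M) (hclopen : ∀ C ∈ 𝒞, IsClopen C)
    (hchain : IsChain (· ⊆ ·) 𝒞) (hempty : ∅ ∈ 𝒞) (hC : C ∈ 𝒞) (hHM : H ∈ M) (hH : IsClosed H) :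
    Disjoint H (lowerGap (M ∩ 𝒞) C) ↔
      ∃ D ∈ M ∩ 𝒞, ∃ E ∈ M ∩ 𝒞, D ⊆ C ∧ C ⊆ E ∧ Disjoint H (E \ D) := by
  refine ⟨fun hdisj => ?_, fun ⟨D, hD, E, _, hDC, hCE, hdisj⟩ =>
    hdisj.mono_right (lowerGap_subset_sdiff hD hDC hCE)⟩
  obtain ⟨D, hD, hDC, hHD⟩ := exists_disjoint_sdiff_of_disjoint_lowerGap
    (fun D hD => (hclopen D hD.2).isOpen) (hchain.mono inter_subset_right)
    ⟨hM.empty_mem, hempty⟩ (hclopen C hC).isClosed hH hdisj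
  obtain ⟨E, hE, hCE, hHE⟩ := hM.exists_superset H hHM D hD.1 C hC hDC hHD
  exact ⟨D, hD, E, hE, hDC, hCE, hHE⟩

theorem Reflects.disjoint_upperGap_iff (hM : Reflects U 𝒞 M) (hclopen : ∀ C ∈ 𝒞, IsClopen C)
    (hchain : IsChain (· ⊆ ·) 𝒞) (huniv : univ ∈ 𝒞) (hC : C ∈ 𝒞) (hHM : H ∈ M) (hH : IsClosed H) :
    Disjoint H (upperGap (M ∩ 𝒞) C) ↔
      ∃ D ∈ M ∩ 𝒞, ∃ E ∈ M ∩ 𝒞, D ⊆ C ∧ C ⊆ E ∧ Disjoint H (E \ D) := by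
  refine ⟨fun hdisj => ?_, fun ⟨D, _, E, hE, hDC, hCE, hdisj⟩ =>
    hdisj.mono_right (upperGap_subset_sdiff hE hDC hCE)⟩
  obtain ⟨E, hE, hCE, hHE⟩ := exists_disjoint_sdiff_of_disjoint_upperGap
    (fun E hE => (hclopen E hE.2).isClosed) (hchain.mono inter_subset_right)
    ⟨hM.univ_mem, huniv⟩ (hclopen C hC).isOpen hH hdisj
  obtain ⟨D, hD, hDC, hHD⟩ := hM.exists_subset H hHM E hE.1 C hC hCE hHE
  exact ⟨D, hD, E, hE, hDC, hCE, hHD⟩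

theorem Reflects.nonempty_lowerGap (hM : Reflects U 𝒞 M) (hclopen : ∀ C ∈ 𝒞, IsClopen C)
    (hchain : IsChain (· ⊆ ·) 𝒞) (hempty : ∅ ∈ 𝒞) (hC : C ∈ 𝒞) (hCM : C ∉ M) :
    (lowerGap (M ∩ 𝒞) C).Nonempty := by
  by_contra hgap
  obtain ⟨D, hD, E, -, hDC, hCE, hdisj⟩ :=
    (hM.disjoint_lowerGap_iff hclopen hchain hempty hC hM.univ_mem isClosed_univ).1
      (not_nonempty_iff_eq_empty.1 hgap ▸ disjoint_empty _)
  have hED : E ⊆ D := sdiff_eq_empty.1 (univ_disjoint.1 hdisj)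
  exact hCM (hDC.antisymm (hCE.trans hED) ▸ hD.1)

theorem Reflects.isStableFamily (hM : Reflects U 𝒞 M) (hopen : ∀ n, ∀ V ∈ U n, IsOpen V)
    (hclopen : ∀ C ∈ 𝒞, IsClopen C) (hchain : IsChain (· ⊆ ·) 𝒞) (hempty : ∅ ∈ 𝒞) (hC : C ∈ 𝒞)
    (n : ℕ) : IsStableFamily (𝓟 (lowerGap (M ∩ 𝒞) C)) (U n) {H ∈ M | IsClosed H} where
  isClosed _ hH := hH.2
  pieces_subset H hH _ hA :=
    ⟨hM.pieces_subset n H hH.1 hA, isClosed_of_mem_pieces (hopen n) hH.2 hA⟩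
  exists_inter_mem H hH Z hZ hlZ := by
    obtain ⟨D, hD, E, hE, hDC, hCE, hdisj⟩ :=
      (hM.disjoint_lowerGap_iff hclopen hchain hempty hC hZ.1 hZ.2).1
        (Set.disjoint_right.2 (eventually_principal.1 hlZ))
    have hinter : H ∩ (E \ D) = (H \ D) \ (H \ E) := by grind
    refine ⟨E \ D, mem_principal.2 (lowerGap_subset_sdiff hD hDC hCE), hdisj.symm, ?_,
      hH.2.inter ((hclopen E hE.2).isClosed.sdiff (hclopen D hD.2).isOpen)⟩
    exact hinter ▸ hM.sdiff_mem _ (hM.sdiff_mem H hH.1 D hD.1) _ (hM.sdiff_mem H hH.1 E hE.1)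

theorem Reflects.subset (hM : Reflects U 𝒞 M) (hU : IsGruenhageSystem U)
    (hclopen : ∀ C ∈ 𝒞, IsClopen C) (hchain : IsChain (· ⊆ ·) 𝒞) (hempty : ∅ ∈ 𝒞)
    (huniv : univ ∈ 𝒞) : 𝒞 ⊆ M := by
  intro C hC
  by_contra hCM
  have : (𝓟 (lowerGap (M ∩ 𝒞) C)).NeBot := principal_neBot_iff.2
    (hM.nonempty_lowerGap hclopen hchain hempty hC hCM)
  obtain ⟨H, hanti, hH, hsub⟩ := hU.exists_antitone_subsingleton_iInter
    (hM.isStableFamily hU.isOpen hclopen hchain hempty hC) ⟨hM.univ_mem, isClosed_univ⟩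
  have hmeet_lower : ∀ n, (H n ∩ lowerGap (M ∩ 𝒞) C).Nonempty := fun n =>
    let ⟨x, hx, hxH⟩ := frequently_principal.1 (hH n).2
    ⟨x, hxH, hx⟩
  have hmeet_upper : ∀ n, (H n ∩ upperGap (M ∩ 𝒞) C).Nonempty := fun n => by
    obtain ⟨⟨hHM, hclosed⟩, -⟩ := hH n
    rw [← not_disjoint_iff_nonempty_inter,
      hM.disjoint_upperGap_iff hclopen hchain huniv hC hHM hclosed,
      ← hM.disjoint_lowerGap_iff hclopen hchain hempty hC hHM hclosed,
      not_disjoint_iff_nonempty_inter]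
    exact hmeet_lower n
  have hmeet {G : Set X} (hG : IsClosed G) (h : ∀ n, (H n ∩ G).Nonempty) :
      ((⋂ n, H n) ∩ G).Nonempty :=
    nonempty_iInter_inter_of_antitone hanti (fun n => (hH n).1.2) hG h
  obtain ⟨x, hx, hxC, -⟩ := hmeet (isClosed_lowerGap (fun D hD => (hclopen D hD.2).isOpen)
    (hclopen C hC).isClosed) hmeet_lower
  obtain ⟨y, hy, -, hyC⟩ := hmeet (isClosed_upperGap (fun E hE => (hclopen E hE.2).isClosed)
    (hclopen C hC).isOpen) hmeet_upper
  exact hyC (hsub hx hy ▸ hxC)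

theorem IsGruenhageSystem.countable_of_isChain_isClopen (hU : IsGruenhageSystem U)
    (hclopen : ∀ C ∈ 𝒞, IsClopen C) (hchain : IsChain (· ⊆ ·) 𝒞) : 𝒞.Countable := by
  have hclopen' : ∀ C ∈ insert ∅ (insert univ 𝒞), IsClopen C := by
    rintro C (rfl | rfl | hC)
    exacts [isClopen_empty, isClopen_univ, hclopen C hC]
  have hchain' : IsChain (· ⊆ ·) (insert ∅ (insert univ 𝒞)) :=
    (hchain.insert fun C _ _ => .inr (subset_univ C)).insert fun C _ _ => .inl (empty_subset C)
  obtain ⟨M, hM, hreflects⟩ := hU.exists_countable_reflects hclopen' hchain'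
  exact hM.mono fun C hC =>
    hreflects.subset hU hclopen' hchain' (.inl rfl) (.inr (.inl rfl)) (.inr (.inr hC))

end Chains

section Functions

variable {K : Type*} [TopologicalSpace K] {δ : ℝ} {f g : C(K, ℝ)} {t : K}

/-- The closed set on which `f` has modulus at least `δ`; along a `δ`-`≺`-chain these sets
form a strict chain. -/
def absSuperlevel (δ : ℝ) (f : C(K, ℝ)) : Set K :=
  {t | δ ≤ |f t|}

theorem Prec.eq_of_ne_zero (h : Prec f g) (ht : f t ≠ 0) : f t = g t :=
  h.2 t (subset_closure ht)

theorem ne_zero_of_mem_absSuperlevel (hδ : 0 < δ) (ht : t ∈ absSuperlevel δ f) : f t ≠ 0 :=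
  abs_pos.1 (hδ.trans_le ht)

theorem Prec.absSuperlevel_subset (h : Prec f g) (hδ : 0 < δ) :
    absSuperlevel δ f ⊆ absSuperlevel δ g := fun t ht => by
  simpa only [absSuperlevel, mem_ofPred_eq,
    h.eq_of_ne_zero (ne_zero_of_mem_absSuperlevel hδ ht)] using ht

variable [CompactSpace K]

theorem PrecDelta.absSuperlevel_ssubset (h : PrecDelta δ f g) (hδ : 0 < δ) :
    absSuperlevel δ f ⊂ absSuperlevel δ g := by
  refine ⟨h.1.absSuperlevel_subset hδ, fun hsub => ?_⟩
  obtain ⟨t, ht⟩ : ∃ t, δ ≤ |f t - g t| := by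
    by_contra! hlt
    exact h.2.not_gt ((ContinuousMap.norm_lt_iff _ hδ).2 hlt)
  have hft : f t = 0 := by
    by_contra hne
    rw [h.1.eq_of_ne_zero hne, sub_self, abs_zero] at ht
    exact ht.not_gt hδ
  have htg : t ∈ absSuperlevel δ g := by
    rwa [hft, zero_sub, abs_neg] at ht
  exact ne_zero_of_mem_absSuperlevel hδ (hsub htg) hft

variable {F : Set C(K, ℝ)}

theorem IsPrecChain.injOn_absSuperlevel (hF : IsPrecChain δ F) (hδ : 0 < δ) :
    InjOn (absSuperlevel δ) F := by
  intro f hf g hg heq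
  by_contra hne
  rcases hF f hf g hg hne with h | h
  exacts [(h.absSuperlevel_ssubset hδ).ne heq, (h.absSuperlevel_ssubset hδ).ne' heq]

theorem IsPrecChain.isChain_absSuperlevel (hF : IsPrecChain δ F) (hδ : 0 < δ) :
    IsChain (· ⊆ ·) (absSuperlevel δ '' F) := by
  rintro _ ⟨f, hf, rfl⟩ _ ⟨g, hg, rfl⟩ hne
  exact (hF f hf g hg (ne_of_apply_ne _ hne)).imp (fun h => h.1.absSuperlevel_subset hδ)
    fun h => h.1.absSuperlevel_subset hδ

theorem IsPrecChain.mem_absSuperlevel_of_ne_zero (hF : IsPrecChain δ F) (hδ : 0 < δ) (hf : f ∈ F)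
    (ht : t ∈ closure (⋃₀ (absSuperlevel δ '' F))) (hft : f t ≠ 0) : t ∈ absSuperlevel δ f := by
  by_contra hlt
  have hopen : IsOpen {s | f s ≠ 0 ∧ |f s| < δ} :=
    (isOpen_ne_fun f.continuous continuous_const).inter
      (isOpen_lt f.continuous.abs continuous_const)
  obtain ⟨s, ⟨hfs, hsδ⟩, _, ⟨g, hg, rfl⟩, hsg⟩ := mem_closure_iff.1 ht _ hopen ⟨hft, not_le.1 hlt⟩
  have heq : f s = g s := by
    rcases eq_or_ne f g with rfl | hne
    · rfl
    · rcases hF f hf g hg hne with h | h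
      exacts [h.1.eq_of_ne_zero hfs,
        (h.1.eq_of_ne_zero (ne_zero_of_mem_absSuperlevel hδ hsg)).symm]
  exact hsδ.not_ge (heq ▸ hsg)

theorem IsPrecChain.isClopen_preimage_absSuperlevel (hF : IsPrecChain δ F) (hδ : 0 < δ)
    (hf : f ∈ F) : IsClopen
      ((↑) ⁻¹' absSuperlevel δ f : Set (closure (⋃₀ (absSuperlevel δ '' F)))) := by
  refine ⟨(isClosed_le continuous_const f.continuous.abs).preimage continuous_subtype_val, ?_⟩
  have heq : ((↑) ⁻¹' absSuperlevel δ f : Set (closure (⋃₀ (absSuperlevel δ '' F)))) =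
      (↑) ⁻¹' {t | f t ≠ 0} := by
    ext t
    exact ⟨ne_zero_of_mem_absSuperlevel hδ, hF.mem_absSuperlevel_of_ne_zero hδ hf t.2⟩
  exact heq ▸ (isOpen_ne_fun f.continuous continuous_const).preimage continuous_subtype_val

end Functions

theorem stmt13_general {K : Type*} [TopologicalSpace K] [CompactSpace K] {U : ℕ → Set (Set K)}
    (hU : IsGruenhageSystem U) {δ : ℝ} (hδ : 0 < δ) {F : Set C(K, ℝ)} (hF : IsPrecChain δ F) :
    F.Countable := by
  let L : Set K := closure (⋃₀ (absSuperlevel δ '' F))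
  have : CompactSpace L := isCompact_iff_compactSpace.1 isClosed_closure.isCompact
  let trace : Set K → Set L := preimage (↑)
  have hinj : InjOn trace (absSuperlevel δ '' F) := injOn_preimage fun A hA =>
    Subtype.range_coe.symm ▸ (subset_sUnion_of_mem hA).trans subset_closure
  have hchain : IsChain (· ⊆ ·) (trace '' (absSuperlevel δ '' F)) := by
    rintro _ ⟨A, hA, rfl⟩ _ ⟨B, hB, rfl⟩ -
    exact ((hF.isChain_absSuperlevel hδ).total hA hB).imp (preimage_mono ·) (preimage_mono ·)
  have hcountable : (trace '' (absSuperlevel δ '' F)).Countable :=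
    (hU.preimage continuous_subtype_val Subtype.val_injective).countable_of_isChain_isClopen
      (forall_mem_image.2 (forall_mem_image.2 fun f hf => hF.isClopen_preimage_absSuperlevel hδ hf))
      hchain
  exact countable_of_injective_of_countable_image (hF.injOn_absSuperlevel hδ)
    (countable_of_injective_of_countable_image hinj hcountable)

/-- Every Gruenhage compact space has the Bishop property (B). -/
theorem stmt13 {K : Type*} [TopologicalSpace K] [CompactSpace K] [T2Space K]
    (U : ℕ → Set (Set K)) (R : ℕ → Set K)
    (hU : ∀ n, ∀ V ∈ U n, IsOpen V) (hR : ∀ n, IsOpen (R n))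
    (h1 : ∀ n, ∀ V ∈ U n, ∀ W ∈ U n, V ≠ W → V ∩ W = R n)
    (h2 : ∀ s t : K, s ≠ t → ∃ m, ∃ V ∈ U m, Xor' (s ∈ V) (t ∈ V)) :
    HasBishop K :=
  fun _ hδ _ hF => stmt13_general (isGruenhageSystem_of_inter_eq hU h1 h2) hδ hF
end

section
/- The Stone–Čech compactification βℕ of the natural numbers with the discrete topology does not have the Bishop property (B): there is an uncountable 1-≺-chain in C(βℕ). -/
open Set Topology Filter

/-!
The characteristic function of a clopen set is supported on that set, so a strictly increasing
family of clopen sets yields a `1`-`≺`-chain of characteristic functions. For infinite discrete `X`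
the clopen subsets of `βX` form a copy of the power set of `X`, hence contain a copy of the power
set of `ℕ`, and this contains the uncountable chain of the cuts `{n | q n < r}`, `r ∈ ℝ`, for a
dense sequence `q` of reals.
-/

open TopologicalSpace

lemma isPrecChain_range {K α : Type*} [TopologicalSpace K] [CompactSpace K] [LinearOrder α] {δ : ℝ}
    {u : α → C(K, ℝ)} (hu : ∀ ⦃a b⦄, a < b → PrecDelta δ (u a) (u b)) :
    IsPrecChain δ (range u) := by
  rintro _ ⟨a, rfl⟩ _ ⟨b, rfl⟩ hne
  exact (ne_of_apply_ne u hne).lt_or_gt.imp (@hu a b) (@hu b a)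

lemma not_countable_range_of_injective {α β : Type*} [Uncountable α] {u : α → β}
    (hu : Function.Injective u) : ¬ (range u).Countable := by
  intro hcount
  apply not_countable_univ (α := α)
  simpa only [preimage_range] using hcount.preimage_of_injOn hu.injOn

section ClopenIndicator

variable {K : Type*} [TopologicalSpace K]

/-- The characteristic function of a clopen set, as an element of `C(K, ℝ)`. -/
noncomputable def clopenIndicator (U : Clopens K) : C(K, ℝ) :=
  LocallyConstant.charFn ℝ U.isClopen

lemma clopenIndicator_eq_one_iff {U : Clopens K} {t : K} : clopenIndicator U t = 1 ↔ t ∈ U :=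
  LocallyConstant.charFn_eq_one ℝ t U.isClopen

lemma clopenIndicator_eq_zero_iff {U : Clopens K} {t : K} : clopenIndicator U t = 0 ↔ t ∉ U :=
  LocallyConstant.charFn_eq_zero ℝ t U.isClopen

lemma closure_support_clopenIndicator (U : Clopens K) :
    closure {t | clopenIndicator U t ≠ 0} = U := by
  have hsupp : {t | clopenIndicator U t ≠ 0} = U := by
    ext t
    simp [clopenIndicator_eq_zero_iff]
  rw [hsupp, U.isClosed.closure_eq]

lemma prec_clopenIndicator {U V : Clopens K} (hUV : U < V) :
    Prec (clopenIndicator U) (clopenIndicator V) := by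
  refine ⟨fun heq => hUV.ne (SetLike.ext fun t => ?_), fun t ht => ?_⟩
  · rw [← clopenIndicator_eq_one_iff, heq, clopenIndicator_eq_one_iff]
  · rw [closure_support_clopenIndicator] at ht
    rw [clopenIndicator_eq_one_iff.2 ht, clopenIndicator_eq_one_iff.2 (hUV.le ht)]

lemma one_le_norm_clopenIndicator_sub [CompactSpace K] {U V : Clopens K} (hUV : U < V) :
    1 ≤ ‖clopenIndicator U - clopenIndicator V‖ := by
  obtain ⟨t, htV, htU⟩ := SetLike.exists_of_lt hUV
  calc 1 = ‖(clopenIndicator U - clopenIndicator V) t‖ := by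
        simp [clopenIndicator_eq_one_iff.2 htV, clopenIndicator_eq_zero_iff.2 htU]
    _ ≤ ‖clopenIndicator U - clopenIndicator V‖ := ContinuousMap.norm_coe_le_norm _ t

lemma precDelta_one_clopenIndicator [CompactSpace K] {U V : Clopens K} (hUV : U < V) :
    PrecDelta 1 (clopenIndicator U) (clopenIndicator V) :=
  ⟨prec_clopenIndicator hUV, one_le_norm_clopenIndicator_sub hUV⟩

end ClopenIndicator

section StoneCechClopen

variable {X : Type*} [TopologicalSpace X]

/-- The clopen subset of the Stone–Čech compactification with trace `U` on `X`, cut out by the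
extension of the `Bool`-valued indicator of `U`. -/
noncomputable def stoneCechClopen (U : Clopens X) : Clopens (StoneCech X) where
  carrier := stoneCechExtend ((continuous_boolIndicator_iff_isClopen _).2 U.isClopen) ⁻¹' {true}
  isClopen' := (isClopen_discrete _).preimage (continuous_stoneCechExtend _)

lemma stoneCechUnit_mem_stoneCechClopen {U : Clopens X} {x : X} :
    stoneCechUnit x ∈ stoneCechClopen U ↔ x ∈ U := by
  change stoneCechExtend _ (stoneCechUnit x) = true ↔ x ∈ (U : Set X)
  rw [stoneCechExtend_stoneCechUnit, ← mem_iff_boolIndicator]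

lemma stoneCechClopen_le_iff {U V : Clopens X} :
    stoneCechClopen U ≤ stoneCechClopen V ↔ U ≤ V := by
  refine ⟨fun h x hx => ?_, fun h t htU => ?_⟩
  · exact stoneCechUnit_mem_stoneCechClopen.1 (h (stoneCechUnit_mem_stoneCechClopen.2 hx))
  · by_contra htV
    obtain ⟨x, hxU, hxV⟩ := denseRange_stoneCechUnit.exists_mem_open
      (stoneCechClopen U \ stoneCechClopen V).isOpen ⟨t, htU, htV⟩
    exact hxV (stoneCechUnit_mem_stoneCechClopen.2 (h (stoneCechUnit_mem_stoneCechClopen.1 hxU)))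

lemma stoneCechClopen_strictMono :
    StrictMono (stoneCechClopen : Clopens X → Clopens (StoneCech X)) :=
  strictMono_of_le_iff_le fun _ _ => stoneCechClopen_le_iff.symm

end StoneCechClopen

lemma strictMono_preimage_Iio {ι α : Type*} [LinearOrder α] [DenselyOrdered α]
    [TopologicalSpace α] [OrderClosedTopology α] {q : ι → α} (hq : DenseRange q) :
    StrictMono fun a => q ⁻¹' Iio a := by
  intro a b hab
  obtain ⟨_, ⟨i, rfl⟩, hai, hib⟩ := hq.exists_between hab
  exact ssubset_iff_exists.2 ⟨preimage_mono (Iio_subset_Iio hab.le), i, hib, hai.not_gt⟩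

lemma exists_strictMono_real_set (X : Type*) [Infinite X] : ∃ A : ℝ → Set X, StrictMono A :=
  ⟨_, (Infinite.natEmbedding X).injective.image_strictMono.comp
    (strictMono_preimage_Iio (denseRange_denseSeq ℝ))⟩

theorem stmt17_general (X : Type*) [TopologicalSpace X] [DiscreteTopology X] [Infinite X] :
    (∃ F : Set C(StoneCech X, ℝ), ¬ F.Countable ∧ IsPrecChain 1 F) ∧
      ¬ HasBishop (StoneCech X) := by
  obtain ⟨A, hA⟩ := exists_strictMono_real_set X
  let U (r : ℝ) : Clopens X := ⟨A r, isClopen_discrete _⟩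
  have hU : StrictMono U := hA
  have hchain ⦃r s : ℝ⦄ (hrs : r < s) :=
    precDelta_one_clopenIndicator (stoneCechClopen_strictMono (hU hrs))
  have hF := isPrecChain_range hchain
  have hunc := not_countable_range_of_injective
    (Function.Injective.of_lt_imp_ne fun _ _ hrs => (hchain hrs).1.1)
  exact ⟨⟨_, hunc, hF⟩, fun hB => hunc (hB 1 one_pos _ hF)⟩

/-- `βℕ` does not have the Bishop property (B): there is an uncountable `1`-`≺`-chain
in `C(βℕ)`. -/
theorem stmt17 :
    (∃ F : Set C(StoneCech ℕ, ℝ), ¬ F.Countable ∧ IsPrecChain 1 F) ∧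
      ¬ HasBishop (StoneCech ℕ) :=
  stmt17_general ℕ
end
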